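/- Let X be an ∞-pseudo-metric space with APD profile (1,α) and let Y be an ∞-pseudo-metric space such that for every t > 0, Y is a finite union of subsets of scale-t-dimension 0. If Y is of scale-r-dimension 0 for some r > 0, then for every s ≥ r the product X × Y with the supremum ∞-pseudo-metric decomposes as Z_0 ∪ Z_1, where Z_0 is of scale-r-dimension 0 and Z_1 is the union of at most ⌊α(r)⌋ subsets of scale-s-dimension 0. -/

import Mathlib

open Set
open scoped ENNReal

/-- `y` is joined to `x` by a scale-`r`-chain in `A`: a finite sequence of points of `A`
starting at `x` and ending at `y`, consecutive points of which have intersecting open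
`r`-balls. -/
def ScaleChain {X : Type*} [PseudoEMetricSpace X] (r : ℝ) (A : Set X) (x y : X) : Prop :=
  ∃ n : ℕ, ∃ c : ℕ → X, (∀ i ≤ n, c i ∈ A) ∧ c 0 = x ∧ c n = y ∧
    ∀ i < n,
      (EMetric.ball (c i) (ENNReal.ofReal r) ∩
        EMetric.ball (c (i + 1)) (ENNReal.ofReal r)).Nonempty

/-- The scale-`r`-component of `x` in `A`: all points of `A` joined to `x` by a
scale-`r`-chain in `A`. -/
def ScaleComponent {X : Type*} [PseudoEMetricSpace X] (r : ℝ) (A : Set X) (x : X) : Set X :=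
  {y | ScaleChain r A x y}

/-- `A` has scale-`r`-dimension `0`: there is a finite bound on the diameters of all
scale-`r`-components of `A`. -/
def ScaleDimZero {X : Type*} [PseudoEMetricSpace X] (r : ℝ) (A : Set X) : Prop :=
  ∃ M : ℝ≥0∞, M ≠ ⊤ ∧ ∀ x ∈ A, EMetric.diam (ScaleComponent r A x) ≤ M

/-- `A` is the union of at most `n` subsets of scale-`s`-dimension `0`. -/
def UnionAtMost {X : Type*} [PseudoEMetricSpace X] (n : ℕ) (s : ℝ) (A : Set X) : Prop :=
  ∃ G : Fin n → Set X, A = ⋃ j, G j ∧ ∀ j, ScaleDimZero s (G j)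

/-- `(1, α)` is an APD profile of `X`: for all reals `0 < r ≤ s` there is a decomposition
`X = X₀ ∪ X₁` with `X₀` of scale-`r`-dimension `0` and `X₁` the union of at most `⌊α r⌋`
subsets of scale-`s`-dimension `0`. -/
def APDPair (X : Type*) [PseudoEMetricSpace X] (α : ℝ → ℝ) : Prop :=
  ∀ r s : ℝ, 0 < r → r ≤ s →
    ∃ X₀ X₁ : Set X, X₀ ∪ X₁ = univ ∧ ScaleDimZero r X₀ ∧ UnionAtMost (Nat.floor (α r)) s X₁

/-!
Colour the scale-`r`-components of `Y` by the pieces of a cover of `Y` at a scale exceeding `s` by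
more than their diameters; the `m` colour classes then still have scale-`s`-dimension `0`.
Decompose `X` at a scale `S` that is large compared with `r`, `s` and `m`, and around each
scale-`S` piece `G j` choose `m` far apart shells of width `2r`, one for each colour. For a fixed
colour, removing its shells around all the `G j` leaves a set of scale-`r`-dimension `0`. Over a
point of `Y` of colour `i`, let the `j`-th piece of `Z₁` be the `i`-th shell around `G j`. A
scale-`s`-chain in this piece cannot jump between different shells, hence never changes colour. A
scale-`r`-chain outside `Z₁` keeps its colour because its projection to `Y` stays in one component.
-/

/-- The open `r`-balls around `x` and `y` intersect: `x, y` is a scale-`r`-chain of length one. -/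
def ScaleStep {X : Type*} [PseudoEMetricSpace X] (r : ℝ) (x y : X) : Prop :=
  (Metric.eball x (ENNReal.ofReal r) ∩ Metric.eball y (ENNReal.ofReal r)).Nonempty

/-- The shell between the `a`- and the `b`-thickening of `A`, that is, the set of points whose
distance to `A` lies in `[a, b)`. -/
def shell {X : Type*} [PseudoEMetricSpace X] (a b : ℝ) (A : Set X) : Set X :=
  Metric.thickening b A \ Metric.thickening a A

/-- The space is a union `X₀ ∪ X₁` with `X₀` of scale-`r`-dimension `0` and `X₁` the union of at
most `k` subsets of scale-`s`-dimension `0`. An APD profile `(1, α)` provides this with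
`k = ⌊α r⌋` for all `0 < r ≤ s`. -/
def ScaleDecomposable (X : Type*) [PseudoEMetricSpace X] (k : ℕ) (r s : ℝ) : Prop :=
  ∃ X₀ X₁ : Set X, X₀ ∪ X₁ = univ ∧ ScaleDimZero r X₀ ∧ UnionAtMost k s X₁

section

variable {X Y I : Type*} [PseudoEMetricSpace X] [PseudoEMetricSpace Y]
  {r s a b : ℝ} {A B : Set X} {x y z : X}

theorem edist_lt_ofReal_add (hxy : edist x y < ENNReal.ofReal a)
    (hyz : edist y z < ENNReal.ofReal b) : edist x z < ENNReal.ofReal (a + b) := by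
  have ha : 0 < a := ENNReal.ofReal_pos.1 (pos_of_gt hxy)
  have hb : 0 < b := ENNReal.ofReal_pos.1 (pos_of_gt hyz)
  rw [ENNReal.ofReal_add ha.le hb.le]
  exact (edist_triangle x y z).trans_lt (ENNReal.add_lt_add hxy hyz)

theorem scaleStep_iff :
    ScaleStep r x y ↔ ∃ z, edist z x < ENNReal.ofReal r ∧ edist z y < ENNReal.ofReal r :=
  Iff.rfl

namespace ScaleStep

theorem symm (h : ScaleStep r x y) : ScaleStep r y x := by
  rwa [ScaleStep, inter_comm]

instance : Std.Symm (ScaleStep r : X → X → Prop) :=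
  ⟨fun _ _ => symm⟩

theorem mono (hrs : r ≤ s) (h : ScaleStep r x y) : ScaleStep s x y :=
  have hball := ENNReal.ofReal_le_ofReal hrs
  Set.Nonempty.mono (inter_subset_inter (Metric.eball_subset_eball hball)
    (Metric.eball_subset_eball hball)) h

theorem edist_lt (h : ScaleStep r x y) : edist x y < ENNReal.ofReal (2 * r) := by
  obtain ⟨z, hx, hy⟩ := scaleStep_iff.1 h
  rw [two_mul]
  exact edist_lt_ofReal_add (edist_comm z x ▸ hx) hy

theorem fst {p q : X × Y} (h : ScaleStep r p q) : ScaleStep r p.1 q.1 := by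
  obtain ⟨z, hp, hq⟩ := scaleStep_iff.1 h
  exact scaleStep_iff.2 ⟨z.1, (le_max_left _ _).trans_lt hp, (le_max_left _ _).trans_lt hq⟩

theorem snd {p q : X × Y} (h : ScaleStep r p q) : ScaleStep r p.2 q.2 := by
  obtain ⟨z, hp, hq⟩ := scaleStep_iff.1 h
  exact scaleStep_iff.2 ⟨z.2, (le_max_right _ _).trans_lt hp, (le_max_right _ _).trans_lt hq⟩

theorem mem_thickening (h : ScaleStep r x y) (hx : x ∈ Metric.thickening a A) :
    y ∈ Metric.thickening (a + 2 * r) A := by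
  obtain ⟨z, hz, hxz⟩ := (Metric.mem_thickening_iff_exists_edist_lt _ _).1 hx
  refine (Metric.mem_thickening_iff_exists_edist_lt _ _).2 ⟨z, hz, ?_⟩
  rw [add_comm]
  exact edist_lt_ofReal_add h.symm.edist_lt hxz

end ScaleStep

theorem not_scaleStep_of_mem_shell {c d : ℝ} (hbc : b + 2 * s ≤ c) (hx : x ∈ shell a b A)
    (hy : y ∈ shell c d A) : ¬ ScaleStep s x y := fun h =>
  hy.2 (Metric.thickening_mono hbc A (h.mem_thickening hx.1))

namespace ScaleChain

theorem refl (hx : x ∈ A) : ScaleChain r A x x :=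
  ⟨0, fun _ => x, fun _ _ => hx, rfl, rfl, fun _ h => absurd h (Nat.not_lt_zero _)⟩

theorem left_mem (h : ScaleChain r A x y) : x ∈ A := by
  obtain ⟨n, c, hA, rfl, -, -⟩ := h
  exact hA 0 (Nat.zero_le n)

theorem right_mem (h : ScaleChain r A x y) : y ∈ A := by
  obtain ⟨n, c, hA, -, rfl, -⟩ := h
  exact hA n le_rfl

theorem tail (h : ScaleChain r A x y) (hyz : ScaleStep r y z) (hz : z ∈ A) :
    ScaleChain r A x z := by
  obtain ⟨n, c, hA, rfl, rfl, hc⟩ := h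
  refine ⟨n + 1, fun i => if i ≤ n then c i else z, fun i _ => ?_, by simp, by simp,
    fun i hi => ?_⟩
  · dsimp only
    split_ifs with hin
    exacts [hA i hin, hz]
  · change ScaleStep r _ _
    rcases Nat.lt_succ_iff_lt_or_eq.1 hi with hin | rfl
    · have hi : ScaleStep r (c i) (c (i + 1)) := hc i hin
      simpa only [hin.le, Nat.succ_le_of_lt hin, if_true] using hi
    · simpa using hyz

theorem of_reflTransGen (h : Relation.ReflTransGen (ScaleStep r) x y) :
    ScaleChain r univ x y := by
  induction h with
  | refl => exact refl (mem_univ _)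
  | tail _ hstep ih => exact ih.tail hstep (mem_univ _)

theorem map {B : Set Y} (f : X → Y) (hf : MapsTo f A B)
    (hstep : ∀ u ∈ A, ∀ v ∈ A, ScaleStep r u v → ScaleStep s (f u) (f v))
    (h : ScaleChain r A x y) : ScaleChain s B (f x) (f y) := by
  obtain ⟨n, c, hA, rfl, rfl, hc⟩ := h
  exact ⟨n, f ∘ c, fun i hi => hf (hA i hi), rfl, rfl,
    fun i hi => hstep _ (hA i hi.le) _ (hA (i + 1) hi) (hc i hi)⟩

theorem inter_fiber {κ : X → I} (hκ : ∀ u ∈ A, ∀ v ∈ A, ScaleStep r u v → κ u = κ v)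
    (h : ScaleChain r A x y) : ScaleChain r (A ∩ κ ⁻¹' {κ x}) x y := by
  obtain ⟨n, c, hA, rfl, rfl, hc⟩ := h
  have hconst : ∀ i ≤ n, κ (c i) = κ (c 0) := by
    intro i hi
    induction i with
    | zero => rfl
    | succ i ih => exact (hκ _ (hA i (by lia)) _ (hA _ hi) (hc i hi)).symm.trans (ih (by lia))
  exact ⟨n, c, fun i hi => ⟨hA i hi, hconst i hi⟩, rfl, rfl, hc⟩

end ScaleChain

theorem scaleDimZero_iff : ScaleDimZero r A ↔
    ∃ b : ℝ, ∀ x y, ScaleChain r A x y → edist x y < ENNReal.ofReal b := by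
  constructor
  · rintro ⟨M, hM, hdiam⟩
    refine ⟨M.toReal + 1, fun x y hxy => ?_⟩
    calc edist x y ≤ Metric.ediam (ScaleComponent r A x) :=
          Metric.edist_le_ediam_of_mem (ScaleChain.refl hxy.left_mem) hxy
      _ ≤ M := hdiam x hxy.left_mem
      _ < ENNReal.ofReal (M.toReal + 1) :=
          (ENNReal.lt_ofReal_iff_toReal_lt hM).2 (lt_add_one _)
  · rintro ⟨b, hb⟩
    refine ⟨ENNReal.ofReal (b + b), ENNReal.ofReal_ne_top, fun x _ =>
      Metric.ediam_le fun y hy z hz => (edist_lt_ofReal_add ?_ (hb x z hz)).le⟩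
    exact edist_comm x y ▸ hb x y hy

namespace ScaleDimZero

theorem mono (hrs : r ≤ s) (hAB : A ⊆ B) (hB : ScaleDimZero s B) : ScaleDimZero r A := by
  obtain ⟨b, hb⟩ := scaleDimZero_iff.1 hB
  exact scaleDimZero_iff.2 ⟨b, fun x y hxy =>
    hb x y (hxy.map id hAB fun _ _ _ _ hstep => hstep.mono hrs)⟩

theorem prod {B : Set Y} (hA : ScaleDimZero r A) (hB : ScaleDimZero r B) :
    ScaleDimZero r (A ×ˢ B) := by
  obtain ⟨a, ha⟩ := scaleDimZero_iff.1 hA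
  obtain ⟨b, hb⟩ := scaleDimZero_iff.1 hB
  refine scaleDimZero_iff.2 ⟨max a b, fun p q hpq => ?_⟩
  have hfst : ScaleChain r A p.1 q.1 := hpq.map Prod.fst (fun _ h => h.1) fun _ _ _ _ h => h.fst
  have hsnd : ScaleChain r B p.2 q.2 := hpq.map Prod.snd (fun _ h => h.2) fun _ _ _ _ h => h.snd
  rw [ENNReal.ofReal_max]
  exact max_lt_max (ha _ _ hfst) (hb _ _ hsnd)

protected theorem thickening (hA : ScaleDimZero (s + b) A) :
    ScaleDimZero s (Metric.thickening b A) := by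
  obtain ⟨M, hM⟩ := scaleDimZero_iff.1 hA
  have hnear : ∀ x ∈ Metric.thickening b A, ∃ u ∈ A, edist x u < ENNReal.ofReal b :=
    fun x => (Metric.mem_thickening_iff_exists_edist_lt A x).1
  choose! f hfA hf using hnear
  refine scaleDimZero_iff.2 ⟨b + M + b, fun x y hxy => ?_⟩
  have hfxy : ScaleChain (s + b) A (f x) (f y) := by
    refine hxy.map f hfA fun u hu v hv huv => ?_
    obtain ⟨z, hzu, hzv⟩ := scaleStep_iff.1 huv
    exact scaleStep_iff.2
      ⟨z, edist_lt_ofReal_add hzu (hf u hu), edist_lt_ofReal_add hzv (hf v hv)⟩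
  refine edist_lt_ofReal_add (edist_lt_ofReal_add (hf x hxy.left_mem) (hM _ _ hfxy)) ?_
  exact edist_comm y (f y) ▸ hf y hxy.right_mem

protected theorem shell (hA : ScaleDimZero (s + b) A) : ScaleDimZero s (shell a b A) :=
  hA.thickening.mono le_rfl sdiff_subset

theorem of_coloring [Finite I] (κ : X → I)
    (hκ : ∀ u ∈ A, ∀ v ∈ A, ScaleStep r u v → κ u = κ v)
    (hA : ∀ i, ScaleDimZero r (A ∩ κ ⁻¹' {i})) : ScaleDimZero r A := by
  choose b hb using fun i => scaleDimZero_iff.1 (hA i)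
  obtain ⟨M, hM⟩ := (finite_range b).bddAbove
  exact scaleDimZero_iff.2 ⟨M, fun x y hxy => (hb (κ x) x y (hxy.inter_fiber hκ)).trans_le
    (ENNReal.ofReal_le_ofReal (hM (mem_range_self (κ x))))⟩

theorem setOf_fst_mem [Finite I] {κ : Y → I} {U : I → Set X} (hU : ∀ i, ScaleDimZero r (U i))
    (hκ₀ : ∀ i, ScaleDimZero r (κ ⁻¹' {i}))
    (hκ : ∀ p q : X × Y, p.1 ∈ U (κ p.2) → q.1 ∈ U (κ q.2) → ScaleStep r p q → κ p.2 = κ q.2) :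
    ScaleDimZero r {p : X × Y | p.1 ∈ U (κ p.2)} := by
  refine .of_coloring (fun p => κ p.2) (fun p hp q hq => hκ p q hp hq) fun i =>
    ((hU i).prod (hκ₀ i)).mono le_rfl ?_
  rintro p ⟨hp, rfl⟩
  exact ⟨hp, rfl⟩

-- The invariant along chains is the set of those `j` for which the `a`-thickening of `G j`
-- contains the point: a step changing it would have an endpoint in one of the removed shells.
theorem compl_iUnion_shell [Finite I] {G : I → Set X} (ha : 0 < a)
    (hG₀ : ScaleDimZero r (⋃ j, G j)ᶜ) (hG : ∀ j, ScaleDimZero (r + a) (G j)) :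
    ScaleDimZero r (⋃ j, shell a (a + 2 * r) (G j))ᶜ := by
  have hstep : ∀ u v, v ∈ (⋃ j, shell a (a + 2 * r) (G j))ᶜ → ScaleStep r u v →
      {j | u ∈ Metric.thickening a (G j)} ⊆ {j | v ∈ Metric.thickening a (G j)} :=
    fun u v hv huv j hj =>
      by_contra fun hvj => hv (mem_iUnion.2 ⟨j, huv.mem_thickening hj, hvj⟩)
  refine .of_coloring (fun x => {j | x ∈ Metric.thickening a (G j)})
    (fun u hu v hv huv => (hstep u v hv huv).antisymm (hstep v u hu huv.symm)) fun J => ?_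
  rcases J.eq_empty_or_nonempty with rfl | ⟨j, hj⟩
  · refine hG₀.mono le_rfl ?_
    intro x hx hxG
    obtain ⟨j, hj⟩ := mem_iUnion.1 hxG
    exact (mem_singleton_iff.1 hx.2).subset (Metric.self_subset_thickening ha (G j) hj)
  · exact (hG j).thickening.mono le_rfl fun x hx => (mem_singleton_iff.1 hx.2).symm.subset hj

end ScaleDimZero

-- Colour a component by the piece `F i` containing a chosen representative of it.
theorem exists_coloring_of_edist_lt {F : I → Set X} (hF : ⋃ i, F i = univ)
    (hb : ∀ x y : X, ScaleChain r univ x y → edist x y < ENNReal.ofReal b)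
    (hF₀ : ∀ i, ScaleDimZero (s + b) (F i)) :
    ∃ κ : X → I, (∀ x y : X, ScaleStep r x y → κ x = κ y) ∧ ∀ i, ScaleDimZero s (κ ⁻¹' {i}) := by
  choose c hc using fun x => mem_iUnion.1 (hF.symm.subset (mem_univ x))
  let rep (x : X) : X := (Quot.mk (ScaleStep r) x).out
  have hrep : ∀ x, ScaleChain r univ x (rep x) := fun x => by
    have hx : Relation.EqvGen (ScaleStep r) x (rep x) := Quot.eqvGen_exact (Quot.out_eq _).symm
    rw [Relation.EqvGen.eqvGen_eq_reflTransGen] at hx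
    exact .of_reflTransGen hx
  refine ⟨c ∘ rep, fun x y hxy => congrArg (c ∘ Quot.out) (Quot.sound hxy), fun i =>
    (hF₀ i).thickening.mono le_rfl ?_⟩
  rintro x rfl
  exact (Metric.mem_thickening_iff_exists_edist_lt _ _).2 ⟨rep x, hc _, hb _ _ (hrep x)⟩

theorem scaleDecomposable_iff {k : ℕ} : ScaleDecomposable X k r s ↔
    ∃ G : Fin k → Set X, ScaleDimZero r (⋃ j, G j)ᶜ ∧ ∀ j, ScaleDimZero s (G j) := by
  constructor
  · rintro ⟨X₀, _, hcover, hX₀, G, rfl, hG⟩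
    refine ⟨G, hX₀.mono le_rfl fun x hx => ?_, hG⟩
    exact (hcover.symm.subset (mem_univ x)).resolve_right hx
  · rintro ⟨G, hG₀, hG⟩
    exact ⟨(⋃ j, G j)ᶜ, ⋃ j, G j, compl_union_self _, hG₀, G, rfl, hG⟩

theorem exists_separated_decompositions {k : ℕ} (hr : 0 < r) (hs : 0 ≤ s)
    (hX : ∀ S, r ≤ S → ScaleDecomposable X k r S) (m : ℕ) :
    ∃ D : Fin m → Fin k → Set X, (∀ i, ScaleDimZero r (⋃ j, D i j)ᶜ) ∧
      (∀ i j, ScaleDimZero s (D i j)) ∧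
      ∀ i i' j, i ≠ i' → ∀ x ∈ D i j, ∀ y ∈ D i' j, ¬ ScaleStep s x y := by
  -- The `i`-th shells span the distances `[a i, a i + 2 * r)`, which leaves gaps of `2 * s`.
  let a : ℕ → ℝ := fun i => (i + 1) * (2 * r + 2 * s)
  have ha : ∀ i, 0 < a i := fun i => by positivity
  have hgap : ∀ i j, i < j → a i + 2 * r + 2 * s ≤ a j := fun i j hij => by
    have hij' : (i : ℝ) + 1 ≤ j := mod_cast hij
    simp only [a]
    nlinarith
  have hra : r ≤ a m := by
    simp only [a]
    nlinarith [(m.cast_nonneg : (0 : ℝ) ≤ m)]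
  obtain ⟨G, hG₀, hG⟩ := scaleDecomposable_iff.1 (hX (a m) hra)
  refine ⟨fun i j => shell (a i) (a i + 2 * r) (G j), fun i => ?_, fun i j => ?_, ?_⟩
  · exact .compl_iUnion_shell (ha i) hG₀ fun j =>
      (hG j).mono (by linarith [hgap i m i.2]) Subset.rfl
  · exact ((hG j).mono (by linarith [hgap i m i.2]) Subset.rfl).shell
  · intro i i' j hne x hx y hy hxy
    rcases hne.lt_or_gt with hlt | hgt
    · exact not_scaleStep_of_mem_shell (hgap i i' hlt) hx hy hxy
    · exact not_scaleStep_of_mem_shell (hgap i' i hgt) hy hx hxy.symm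

theorem prod_decomposition_of_apdPair_general {k : ℕ} (hr : 0 < r) (hs : 0 < s)
    (hX : ∀ S, r ≤ S → ScaleDecomposable X k r S)
    (hYfin : ∀ t : ℝ, 0 < t → ∃ n : ℕ, ∃ F : Fin n → Set Y,
      (⋃ i, F i) = univ ∧ ∀ i, ScaleDimZero t (F i))
    (hY : ScaleDimZero r (univ : Set Y)) : ScaleDecomposable (X × Y) k r s := by
  obtain ⟨b, hb⟩ := scaleDimZero_iff.1 hY
  obtain ⟨m, F, hF, hF₀⟩ := hYfin (s + |b|) (by positivity)
  obtain ⟨κ, hκ, hκ₀⟩ := exists_coloring_of_edist_lt hF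
    (fun y z hyz => (hb y z hyz).trans_le (ENNReal.ofReal_le_ofReal (le_abs_self b))) hF₀
  obtain ⟨D, hD₀, hD, hsep⟩ := exists_separated_decompositions hr hs.le hX m
  refine scaleDecomposable_iff.2 ⟨fun j => {p | p.1 ∈ D (κ p.2) j}, ?_, fun j => ?_⟩
  · have hcompl : (⋃ j, {p : X × Y | p.1 ∈ D (κ p.2) j})ᶜ =
        {p | p.1 ∈ (⋃ j, D (κ p.2) j)ᶜ} := by
      ext p
      simp only [mem_compl_iff, mem_iUnion, mem_ofPred_eq]
    rw [hcompl]
    exact .setOf_fst_mem hD₀ (fun i => hY.mono le_rfl (subset_univ _))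
      fun p q _ _ hpq => hκ _ _ hpq.snd
  · exact .setOf_fst_mem (U := fun i => D i j) (fun i => hD i j) hκ₀ fun p q hp hq hpq =>
      by_contra fun hne => hsep _ _ j hne _ hp _ hq hpq.fst

end

/-- Let `X` be an `∞`-pseudo-metric space with APD profile `(1, α)` and let `Y` be an
`∞`-pseudo-metric space such that for every `t > 0`, `Y` is a finite union of subsets of
scale-`t`-dimension `0`. If `Y` is of scale-`r`-dimension `0` for some `r > 0`, then for every
`s ≥ r` the product `X × Y` with the supremum `∞`-pseudo-metric decomposes as `Z₀ ∪ Z₁`,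
where `Z₀` is of scale-`r`-dimension `0` and `Z₁` is the union of at most `⌊α r⌋` subsets of
scale-`s`-dimension `0`. -/
theorem prod_decomposition_of_apdPair {X Y : Type*} [PseudoEMetricSpace X]
    [PseudoEMetricSpace Y] (α : ℝ → ℝ)
    (hαmono : MonotoneOn α (Set.Ioi (0 : ℝ))) (hαnonneg : ∀ t : ℝ, 0 < t → 0 ≤ α t)
    (hX : APDPair X α)
    (hYfin : ∀ t : ℝ, 0 < t → ∃ n : ℕ, ∃ F : Fin n → Set Y,
      (⋃ i, F i) = univ ∧ ∀ i, ScaleDimZero t (F i))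
    (r : ℝ) (hr : 0 < r) (hY : ScaleDimZero r (univ : Set Y)) :
    ∀ s : ℝ, r ≤ s →
      ∃ Z₀ Z₁ : Set (X × Y), Z₀ ∪ Z₁ = univ ∧ ScaleDimZero r Z₀ ∧
        UnionAtMost (Nat.floor (α r)) s Z₁ := fun _ hrs =>
  prod_decomposition_of_apdPair_general hr (hr.trans_le hrs) (fun S => hX r S hr) hYfin hY
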